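/- Let X be a compact Hausdorff space, M ≺ H(κ) countable with X ∈ M, L = 2^X ∩ M, and m ≥ 2. Then X is an m-C-space if and only if wL is an m-C-space. In particular (m = 2), X is weakly infinite dimensional if and only if wL is weakly infinite dimensional. -/

import Mathlib

open Set TopologicalSpace FirstOrder

universe u v

/-- `U` is a cover of `X` by open sets. -/
def IsOpenCover {X : Type u} [TopologicalSpace X] (U : Set (Set X)) : Prop :=
  (∀ s ∈ U, IsOpen s) ∧ ⋃₀ U = Set.univ

/-- `V` refines `U`: every member of `V` is contained in some member of `U`. -/
def Refines {X : Type u} (V U : Set (Set X)) : Prop :=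
  ∀ v ∈ V, ∃ u ∈ U, v ⊆ u

/-- `X` is a C-space (has property C): every sequence of open covers admits a sequence of
families of pairwise disjoint open sets, the `i`-th refining the `i`-th cover, whose union
covers `X`. -/
def IsCSpace (X : Type u) [TopologicalSpace X] : Prop :=
  ∀ U : ℕ → Set (Set X), (∀ i, IsOpenCover (U i)) →
    ∃ V : ℕ → Set (Set X),
      (∀ i, (∀ s ∈ V i, IsOpen s) ∧ (V i).PairwiseDisjoint id ∧ Refines (V i) (U i)) ∧
      (⋃ i, ⋃₀ (V i)) = Set.univ

/-- `X` is an `m`-C-space: property C restricted to `m`-element open covers. -/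
def IsMCSpace (m : ℕ) (X : Type u) [TopologicalSpace X] : Prop :=
  ∀ U : ℕ → Fin m → Set X, (∀ i j, IsOpen (U i j)) → (∀ i, (⋃ j, U i j) = Set.univ) →
    ∃ V : ℕ → Set (Set X),
      (∀ i, (∀ s ∈ V i, IsOpen s) ∧ (V i).PairwiseDisjoint id ∧ ∀ v ∈ V i, ∃ j, v ⊆ U i j) ∧
      (⋃ i, ⋃₀ (V i)) = Set.univ

/-- `L` is a separator between `A` and `B`: the complement of `L` splits into disjoint open
sets containing `A` and `B` respectively. -/
def IsSeparator {X : Type u} [TopologicalSpace X] (L A B : Set X) : Prop :=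
  ∃ U V : Set X, IsOpen U ∧ IsOpen V ∧ A ⊆ U ∧ B ⊆ V ∧ Disjoint U V ∧ L = (U ∪ V)ᶜ

/-- `X` is weakly infinite dimensional: every sequence of pairs of disjoint closed sets admits
separators with empty total intersection. -/
def WeaklyInfiniteDimensional (X : Type u) [TopologicalSpace X] : Prop :=
  ∀ A B : ℕ → Set X, (∀ i, IsClosed (A i)) → (∀ i, IsClosed (B i)) →
    (∀ i, Disjoint (A i) (B i)) →
    ∃ S : ℕ → Set X, (∀ i, IsSeparator (S i) (A i) (B i)) ∧ (⋂ i, S i) = ∅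

/-- An ultrafilter on a lattice `F` of subsets of `α` (in the Wallman sense): a proper filter
on `F` such that every member of `F` meeting all members of the filter belongs to it. -/
structure LUltra {α : Type u} (F : Set (Set α)) where
  sets : Set (Set α)
  sets_subset : sets ⊆ F
  univ_mem : Set.univ ∈ sets
  empty_notMem : ∅ ∉ sets
  inter_mem : ∀ a ∈ sets, ∀ b ∈ sets, a ∩ b ∈ sets
  superset_mem : ∀ a ∈ sets, ∀ b ∈ F, a ⊆ b → b ∈ sets
  ultra : ∀ a ∈ F, a ∉ sets → ∃ b ∈ sets, a ∩ b = ∅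

/-- The Wallman topology: the sets `â = {u : a ∈ u}`, `a ∈ F`, form a base for closed sets. -/
instance LUltra.instTopologicalSpace {α : Type u} (F : Set (Set α)) :
    TopologicalSpace (LUltra F) :=
  TopologicalSpace.generateFrom {s | ∃ a ∈ F, s = {u : LUltra F | a ∈ u.sets}ᶜ}

/-- `x ∈ H(κ)`: `x` hereditarily has cardinality `< κ` (for regular `κ` this agrees with
`|TC(x)| < κ`). -/
def HeredLt (κ : Cardinal.{1}) (x : ZFSet.{0}) : Prop :=
  ZFSet.mem_wf.fix (fun x ih => Cardinal.mk x.toSet < κ ∧ ∀ y, ∀ h : y ∈ x, ih y h) x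

/-- `ZFSet` as a structure for the language with one binary relation, interpreted as `∈`. -/
instance ZFSet.memLangStructure : FirstOrder.Language.graph.Structure ZFSet.{0} where
  funMap := fun {_} f => isEmptyElim f
  RelMap := fun {_} r => match r with | .adj => fun x => x 0 ∈ x 1

/-- `H(κ)` as a substructure of the universe of sets with membership. -/
def HKappa (κ : Cardinal.{1}) : FirstOrder.Language.graph.Substructure ZFSet.{0} where
  carrier := {x | HeredLt κ x}
  fun_mem := fun {_} f => isEmptyElim f

/-- `z` belongs to the elementary submodel `M ≺ H(κ)`. -/
def MemOf (κ : Cardinal.{1})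
    (M : FirstOrder.Language.graph.ElementarySubstructure (HKappa κ))
    (z : ZFSet.{0}) : Prop :=
  ∃ h : z ∈ HKappa κ, (⟨z, h⟩ : HKappa κ) ∈ M

/-- The ZF-set coding a subset `A` of (the extension of) the ZF-set `X`. -/
noncomputable def codeSet (X : ZFSet.{0}) (A : Set ↥X.toSet) : ZFSet.{0} :=
  ZFSet.sep (fun y => ∃ h : y ∈ X.toSet, (⟨y, h⟩ : ↥X.toSet) ∈ A) X

/-- The subset of `X` decoded from a ZF-set `t`. -/
def decodeSet (X : ZFSet.{0}) (t : ZFSet.{0}) : Set ↥X.toSet :=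
  {p : ↥X.toSet | (p : ZFSet) ∈ t}

/-- The ZF-set coding the topology of the space `X`: the set of codes of open subsets. -/
noncomputable def opensZ (X : ZFSet.{0}) [TopologicalSpace ↥X.toSet] : ZFSet.{0} :=
  ZFSet.sep (fun t => IsOpen (decodeSet X t)) X.powerset

/-- The lattice `L = 2^X ∩ M`: the closed subsets of `X` whose codes belong to `M`. -/
def Lfam (X : ZFSet.{0}) [TopologicalSpace ↥X.toSet] (κ : Cardinal.{1})
    (M : FirstOrder.Language.graph.ElementarySubstructure (HKappa κ)) :
    Set (Set ↥X.toSet) :=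
  {A | IsClosed A ∧ MemOf κ M (codeSet X A)}

/-! ### Topological part -/

/-- Closed base of a space, closed under finite intersections. -/
structure ClosedBase {Y : Type u} [TopologicalSpace Y] (B : Set (Set Y)) : Prop where
  closed : ∀ b ∈ B, IsClosed b
  univ_mem : Set.univ ∈ B
  inter_mem : ∀ a ∈ B, ∀ b ∈ B, a ∩ b ∈ B
  base : ∀ c, IsClosed c → ∀ x ∉ c, ∃ b ∈ B, c ⊆ b ∧ x ∉ b

/-- The pointwise relation describing a finite solution. -/
def SolR (m n : ℕ) (p q : ℕ → Fin m → Prop) : Prop :=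
  (∀ i < n, (∀ j, p i j → q i j) ∧ ∀ j k, j ≠ k → q i j ∨ q i k) ∧ ∃ i < n, ∃ j, ¬ q i j

/-- `b` is a solution of length `n` for the closed co-covers `a`. -/
def Sol {Y : Type u} (m n : ℕ) (a b : ℕ → Fin m → Set Y) : Prop :=
  ∀ x, SolR m n (fun i j => x ∈ a i j) (fun i j => x ∈ b i j)

theorem ClosedBase.biInter_mem {Y : Type u} [TopologicalSpace Y] {B : Set (Set Y)}
    (hB : ClosedBase B) {ι : Type*} (s : Finset ι) (f : ι → Set Y) (hf : ∀ i ∈ s, f i ∈ B) :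
    (⋂ i ∈ s, f i) ∈ B := by
  classical
  induction s using Finset.induction_on with
  | empty => simpa using hB.univ_mem
  | insert a s ha ih =>
    rw [Finset.set_biInter_insert]
    exact hB.inter_mem _ (hf _ (by simp)) _ (ih fun i hi => hf i (by simp [hi]))

theorem ClosedBase.swell {Y : Type u} [TopologicalSpace Y] [CompactSpace Y] {B : Set (Set Y)}
    (hB : ClosedBase B) {ι : Type} (c : ι → Set Y) (hc : ∀ i, IsClosed (c i))
    (h : ∀ x, ∃ i, x ∉ c i) :
    ∃ b : ι → Set Y, (∀ i, b i ∈ B) ∧ (∀ i, c i ⊆ b i) ∧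
      ∃ s : Finset ι, ∀ x, ∃ i ∈ s, x ∉ b i := by
  classical
  have key := (isCompact_univ (X := Y)).elim_finite_subfamily_closed
    (fun k : {k : ι × Set Y // k.2 ∈ B ∧ c k.1 ⊆ k.2} => k.1.2)
    (fun k => hB.closed _ k.2.1) (by
      rw [Set.univ_inter, Set.eq_empty_iff_forall_notMem]
      intro x hx
      obtain ⟨i, hi⟩ := h x
      obtain ⟨b, hb, hcb, hxb⟩ := hB.base _ (hc i) x hi
      exact hxb (Set.mem_iInter.1 hx ⟨(i, b), hb, hcb⟩))
  obtain ⟨t, ht⟩ := key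
  rw [Set.univ_inter, Set.eq_empty_iff_forall_notMem] at ht
  refine ⟨fun i => ⋂ k ∈ t, (if k.1.1 = i then k.1.2 else Set.univ), fun i =>
    hB.biInter_mem t _ fun k _ => ?_, fun i => ?_, t.image (fun k => k.1.1), fun x => ?_⟩
  · split_ifs
    · exact k.2.1
    · exact hB.univ_mem
  · refine Set.subset_iInter₂ fun k hk => ?_
    split_ifs with h
    · rw [← h]
      exact k.2.2
    · exact Set.subset_univ _
  · have := ht x
    simp only [Set.mem_iInter, not_forall] at this
    obtain ⟨k, hk, hx⟩ := this
    refine ⟨k.1.1, Finset.mem_image_of_mem _ hk, fun hx' => hx ?_⟩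
    have := Set.mem_iInter₂.1 hx' k hk
    rwa [if_pos rfl] at this

theorem mC_iff {Y : Type u} [TopologicalSpace Y] [CompactSpace Y] {B : Set (Set Y)}
    (hB : ClosedBase B) (m : ℕ) (hm : 0 < m) :
    IsMCSpace m Y ↔ ∀ a : ℕ → Fin m → Set Y, (∀ i j, a i j ∈ B) → (∀ i x, ∃ j, x ∉ a i j) →
      ∃ n, ∃ b : ℕ → Fin m → Set Y, (∀ i j, b i j ∈ B) ∧ Sol m n a b := by
  classical
  constructor
  · intro h a ha hcov
    obtain ⟨V, hV, hVc⟩ := h (fun i j => (a i j)ᶜ) (fun i j => (hB.closed _ (ha i j)).isOpen_compl)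
      (fun i => by
        ext x
        simpa using hcov i x)
    have hj : ∀ i, ∃ J : Set Y → Fin m, ∀ v ∈ V i, v ⊆ (a i (J v))ᶜ := by
      intro i
      have : ∀ v, ∃ j, v ∈ V i → v ⊆ (a i j)ᶜ := by
        intro v
        by_cases hv : v ∈ V i
        · obtain ⟨j, hj⟩ := (hV i).2.2 v hv
          exact ⟨j, fun _ => hj⟩
        · exact ⟨⟨0, hm⟩, fun h => absurd h hv⟩
      choose J hJ using this
      exact ⟨J, hJ⟩
    choose J hJ using hj
    obtain ⟨b, hb, hcb, s, hs⟩ := hB.swell (ι := ℕ × Fin m)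
      (fun k => (⋃₀ {v | v ∈ V k.1 ∧ J k.1 v = k.2})ᶜ)
      (fun k => (isOpen_sUnion fun v hv => (hV k.1).1 v hv.1).isClosed_compl)
      (fun x => by
        have : x ∈ ⋃ i, ⋃₀ (V i) := by rw [hVc]; trivial
        obtain ⟨i, v, hv, hx⟩ := Set.mem_iUnion.1 this
        refine ⟨(i, J i v), fun h => h ⟨v, ⟨hv, rfl⟩, hx⟩⟩)
    refine ⟨s.sup Prod.fst + 1, fun i j => b (i, j), fun i j => hb _, fun x => ⟨fun i _ =>
      ⟨fun j hx => hcb (i, j) ?_, fun j k hjk => ?_⟩, ?_⟩⟩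
    · rintro ⟨v, ⟨hv, hvj⟩, hxv⟩
      have := hJ i v hv hxv
      rw [show J i v = j from hvj] at this
      exact this hx
    · by_contra hcon
      push Not at hcon
      have h1 := fun h => hcon.1 (hcb (i, j) h)
      have h2 := fun h => hcon.2 (hcb (i, k) h)
      obtain ⟨v, ⟨hv, hvj⟩, hxv⟩ := not_not.1 h1
      obtain ⟨w, ⟨hw, hwk⟩, hxw⟩ := not_not.1 h2
      have hne : v ≠ w := by
        rintro rfl
        exact hjk (hvj.symm.trans hwk)
      exact Set.disjoint_left.1 ((hV i).2.1 hv hw hne) hxv hxw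
    · obtain ⟨k, hk, hx⟩ := hs x
      exact ⟨k.1, Nat.lt_succ_of_le (Finset.le_sup (f := Prod.fst) hk), k.2, hx⟩
  · intro h U hU hcov
    have hsw : ∀ i, ∃ a : Fin m → Set Y, (∀ j, a j ∈ B) ∧ (∀ j, (U i j)ᶜ ⊆ a j) ∧
        ∀ x, ∃ j, x ∉ a j := by
      intro i
      obtain ⟨a, ha, hca, s, hs⟩ := hB.swell (fun j => (U i j)ᶜ) (fun j => (hU i j).isClosed_compl)
        (fun x => by
          have : x ∈ ⋃ j, U i j := by rw [hcov]; trivial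
          simpa using this)
      exact ⟨a, ha, hca, fun x => (hs x).imp fun j hj => hj.2⟩
    choose a ha hca hcova using hsw
    obtain ⟨n, b, hb, hsol⟩ := h a ha hcova
    refine ⟨fun i => {v | i < n ∧ ∃ j, v = (b i j)ᶜ}, fun i => ⟨?_, ?_, ?_⟩, ?_⟩
    · rintro _ ⟨_, j, rfl⟩
      exact (hB.closed _ (hb i j)).isOpen_compl
    · rintro _ ⟨hi, j, rfl⟩ _ ⟨_, k, rfl⟩ hne
      refine Set.disjoint_left.2 fun x hx hx' => ?_
      have hjk : j ≠ k := by
        rintro rfl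
        exact hne rfl
      rcases ((hsol x).1 i hi).2 j k hjk with h | h
      · exact hx h
      · exact hx' h
    · rintro _ ⟨hi, j, rfl⟩
      refine ⟨j, fun x hx => ?_⟩
      by_contra hxU
      exact hx (((hsol x).1 i hi).1 j (hca i j hxU))
    · refine Set.eq_univ_of_forall fun x => ?_
      obtain ⟨i, hi, j, hx⟩ := (hsol x).2
      exact Set.mem_iUnion.2 ⟨i, _, ⟨hi, j, rfl⟩, hx⟩

theorem closedBase_closed (Y : Type u) [TopologicalSpace Y] :
    ClosedBase {c : Set Y | IsClosed c} :=
  ⟨fun _ h => h, isClosed_univ, fun _ ha _ hb => IsClosed.inter ha hb,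
    fun c hc x hx => ⟨c, hc, subset_rfl, hx⟩⟩

theorem mC_two_iff_wid (Y : Type u) [TopologicalSpace Y] [NormalSpace Y] :
    IsMCSpace 2 Y ↔ WeaklyInfiniteDimensional Y := by
  constructor
  · intro h A B hA hB hAB
    have hn : ∀ i, ∃ P Q : Set Y, IsOpen P ∧ IsOpen Q ∧ A i ⊆ P ∧ B i ⊆ Q ∧
        Disjoint (closure P) (closure Q) := by
      intro i
      obtain ⟨P, hP, hAP, hPB⟩ := normal_exists_closure_subset (hA i) (hB i).isOpen_compl
        (Set.disjoint_left.1 (hAB i))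
      obtain ⟨Q, hQ, hBQ, hQP⟩ := normal_exists_closure_subset (hB i)
        (isClosed_closure (s := P)).isOpen_compl (fun x hx hx' => hPB hx' hx)
      exact ⟨P, Q, hP, hQ, hAP, hBQ, Set.disjoint_left.2 fun x hx hx' => hQP hx' hx⟩
    choose P Q hP hQ hAP hBQ hPQ using hn
    obtain ⟨V, hV, hVc⟩ := h (fun i => ![(closure (Q i))ᶜ, (closure (P i))ᶜ])
      (fun i j => by fin_cases j <;> simp)
      (fun i => by
        refine Set.eq_univ_of_forall fun x => Set.mem_iUnion.2 ?_
        by_cases hx : x ∈ closure (Q i)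
        · exact ⟨1, fun hx' => Set.disjoint_left.1 (hPQ i) hx' hx⟩
        · exact ⟨0, hx⟩)
    refine ⟨fun i => ((P i ∪ ⋃₀ {v | v ∈ V i ∧ v ⊆ (closure (Q i))ᶜ}) ∪
      (Q i ∪ ⋃₀ {v | v ∈ V i ∧ ¬ v ⊆ (closure (Q i))ᶜ}))ᶜ, fun i => ⟨_, _, ?_, ?_, ?_, ?_, ?_, rfl⟩,
      ?_⟩
    · exact (hP i).union (isOpen_sUnion fun v hv => (hV i).1 v hv.1)
    · exact (hQ i).union (isOpen_sUnion fun v hv => (hV i).1 v hv.1)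
    · exact (hAP i).trans Set.subset_union_left
    · exact (hBQ i).trans Set.subset_union_left
    · refine Set.disjoint_left.2 ?_
      rintro x (hx | ⟨v, ⟨hv, hvQ⟩, hxv⟩) (hx' | ⟨w, ⟨hw, hwQ⟩, hxw⟩)
      · exact Set.disjoint_left.1 (hPQ i) (subset_closure hx) (subset_closure hx')
      · obtain ⟨j, hj⟩ := (hV i).2.2 w hw
        fin_cases j
        · exact hwQ hj
        · exact hj hxw (subset_closure hx)
      · exact hvQ hxv (subset_closure hx')
      · have hne : v ≠ w := by
          rintro rfl
          exact hwQ hvQ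
        exact Set.disjoint_left.1 ((hV i).2.1 hv hw hne) hxv hxw
    · refine Set.eq_empty_of_forall_notMem fun x hx => ?_
      have : x ∈ ⋃ i, ⋃₀ (V i) := by rw [hVc]; trivial
      obtain ⟨i, v, hv, hxv⟩ := Set.mem_iUnion.1 this
      refine Set.mem_iInter.1 hx i ?_
      by_cases hvQ : v ⊆ (closure (Q i))ᶜ
      · exact Or.inl (Or.inr ⟨v, ⟨hv, hvQ⟩, hxv⟩)
      · exact Or.inr (Or.inr ⟨v, ⟨hv, hvQ⟩, hxv⟩)
  · intro h U hU hcov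
    obtain ⟨S, hS, hSe⟩ := h (fun i => (U i 0)ᶜ) (fun i => (U i 1)ᶜ)
      (fun i => (hU i 0).isClosed_compl) (fun i => (hU i 1).isClosed_compl)
      (fun i => Set.disjoint_left.2 fun x h0 h1 => by
        have : x ∈ ⋃ j, U i j := by rw [hcov]; trivial
        obtain ⟨j, hj⟩ := Set.mem_iUnion.1 this
        fin_cases j
        · exact h0 hj
        · exact h1 hj)
    choose P Q hP hQ hAP hBQ hPQ hSeq using hS
    refine ⟨fun i => {P i, Q i}, fun i => ⟨?_, ?_, ?_⟩, ?_⟩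
    · rintro s (rfl | rfl)
      exacts [hP i, hQ i]
    · rintro s (rfl | rfl) t (rfl | rfl) hne
      exacts [absurd rfl hne, hPQ i, (hPQ i).symm, absurd rfl hne]
    · rintro s (rfl | rfl)
      · refine ⟨1, fun x hx => ?_⟩
        by_contra hx'
        exact Set.disjoint_left.1 (hPQ i) hx (hBQ i hx')
      · refine ⟨0, fun x hx => ?_⟩
        by_contra hx'
        exact Set.disjoint_left.1 (hPQ i) (hAP i hx') hx
    · refine Set.eq_univ_of_forall fun x => ?_
      by_contra hx
      have : x ∈ ⋂ i, S i := by
        refine Set.mem_iInter.2 fun i => ?_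
        rw [hSeq]
        rintro (hx' | hx')
        · exact hx (Set.mem_iUnion.2 ⟨i, P i, by simp, hx'⟩)
        · exact hx (Set.mem_iUnion.2 ⟨i, Q i, by simp, hx'⟩)
      rw [hSe] at this
      exact this

/-! ### Wallman spaces -/

/-- The properties of the lattice used for the Wallman space. -/
structure GoodLat {α : Type u} (F : Set (Set α)) : Prop where
  univ_mem : Set.univ ∈ F
  empty_mem : ∅ ∈ F
  inter_mem : ∀ a ∈ F, ∀ b ∈ F, a ∩ b ∈ F
  union_mem : ∀ a ∈ F, ∀ b ∈ F, a ∪ b ∈ F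
  disj : ∀ a ∈ F, ∀ b ∈ F, ¬ a ⊆ b → ∃ c ∈ F, c.Nonempty ∧ c ⊆ a ∧ c ∩ b = ∅
  normal : ∀ a ∈ F, ∀ b ∈ F, a ∩ b = ∅ → ∃ c ∈ F, ∃ d ∈ F,
    c ∪ d = Set.univ ∧ a ∩ c = ∅ ∧ b ∩ d = ∅

/-- The basic closed set of the Wallman space. -/
def hat {α : Type u} (F : Set (Set α)) (a : Set α) : Set (LUltra F) := {u | a ∈ u.sets}

section Wallman

variable {α : Type u} {F : Set (Set α)}

theorem LUltra.inter_mem_iff (u : LUltra F) {a b : Set α} (ha : a ∈ F)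
    (hb : b ∈ F) : a ∩ b ∈ u.sets ↔ a ∈ u.sets ∧ b ∈ u.sets :=
  ⟨fun h => ⟨u.superset_mem _ h _ ha Set.inter_subset_left,
    u.superset_mem _ h _ hb Set.inter_subset_right⟩, fun h => u.inter_mem _ h.1 _ h.2⟩

theorem LUltra.union_mem_iff (hF : GoodLat F) (u : LUltra F) {a b : Set α} (ha : a ∈ F)
    (hb : b ∈ F) : a ∪ b ∈ u.sets ↔ a ∈ u.sets ∨ b ∈ u.sets := by
  constructor
  · intro h
    by_contra hcon
    push Not at hcon
    obtain ⟨c, hc, hac⟩ := u.ultra a ha hcon.1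
    obtain ⟨d, hd, hbd⟩ := u.ultra b hb hcon.2
    have := u.inter_mem _ h _ (u.inter_mem _ hc _ hd)
    refine u.empty_notMem ?_
    convert this
    symm
    rw [Set.eq_empty_iff_forall_notMem] at hac hbd ⊢
    rintro x ⟨hx | hx, hxc, hxd⟩
    · exact hac x ⟨hx, hxc⟩
    · exact hbd x ⟨hx, hxd⟩
  · rintro (h | h)
    · exact u.superset_mem _ h _ (hF.union_mem _ ha _ hb) Set.subset_union_left
    · exact u.superset_mem _ h _ (hF.union_mem _ ha _ hb) Set.subset_union_right

/-- Finite intersection property. -/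
def FIP {α : Type u} (S : Set (Set α)) : Prop :=
  ∀ t : Set (Set α), t.Finite → t ⊆ S → (⋂₀ t).Nonempty

theorem exists_ultra (hF : GoodLat F) (S : Set (Set α)) (hSF : S ⊆ F) (hS : FIP S) :
    ∃ u : LUltra F, S ⊆ u.sets := by
  obtain ⟨W, hSW, hmax⟩ := zorn_subset_nonempty {W : Set (Set α) | W ⊆ F ∧ FIP W} (by
    intro c hc hchain hne
    refine ⟨⋃₀ c, ⟨Set.sUnion_subset fun w hw => (hc hw).1, ?_⟩, fun s hs =>
      Set.subset_sUnion_of_mem hs⟩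
    intro t ht htc
    have : ∃ w ∈ c, t ⊆ w := by
      exact hchain.directedOn.exists_mem_subset_of_finite_of_subset_sUnion hne ht htc
    obtain ⟨w, hw, htw⟩ := this
    exact (hc hw).2 t ht htw) S ⟨hSF, hS⟩
  have hWF := hmax.prop.1
  have hW := hmax.prop.2
  -- adding a set compatible with everything
  have hadd : ∀ a ∈ F, (∀ t : Set (Set α), t.Finite → t ⊆ W → (a ∩ ⋂₀ t).Nonempty) → a ∈ W := by
    intro a ha h
    have hle := hmax.le_of_ge (y := insert a W)
      ⟨Set.insert_subset ha hWF, fun t ht htW => by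
        refine (h (t \ {a}) ht.sdiff ?_).mono ?_
        · rintro x ⟨hx, hxa⟩
          rcases htW hx with h | h
          · exact absurd h hxa
          · exact h
        · rintro x ⟨hxa, hxt⟩ s hs
          by_cases hsa : s = a
          · rwa [hsa]
          · exact hxt s ⟨hs, hsa⟩⟩ (Set.subset_insert _ _)
    exact hle (Set.mem_insert _ _)
  have hsInter : ∀ t : Set (Set α), t.Finite → t ⊆ F → ⋂₀ t ∈ F := by
    intro t ht
    induction t, ht using Set.Finite.induction_on with
    | empty => intro _; simpa using hF.univ_mem
    | insert _ _ ih =>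
      intro h
      rw [Set.sInter_insert]
      exact hF.inter_mem _ (h (Set.mem_insert _ _)) _ (ih ((Set.subset_insert _ _).trans h))
  have hsInterW : ∀ t : Set (Set α), t.Finite → t ⊆ W → ⋂₀ t ∈ W := by
    intro t ht htW
    refine hadd _ (hsInter t ht (htW.trans hWF)) fun t' ht' ht'W => ?_
    rw [← Set.sInter_union]
    exact hW _ (ht.union ht') (Set.union_subset htW ht'W)
  refine ⟨⟨W, hWF, ?_, ?_, ?_, ?_, ?_⟩, hSW⟩
  · simpa using hsInterW ∅ Set.finite_empty (Set.empty_subset _)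
  · intro h
    simpa using hW {∅} (Set.finite_singleton _) (by simpa using h)
  · intro a ha b hb
    simpa using hsInterW {a, b} (by simp) (by
      rintro x (rfl | rfl)
      exacts [ha, hb])
  · intro a ha b hb hab
    refine hadd b hb fun t ht htW => ?_
    refine (hW (insert a t) (ht.insert a) (Set.insert_subset ha htW)).mono ?_
    rw [Set.sInter_insert]
    exact Set.inter_subset_inter_left _ hab
  · intro a ha haW
    by_contra hcon
    push Not at hcon
    exact haW (hadd a ha fun t ht htW => hcon _ (hsInterW t ht htW))

theorem isClosed_hat {a : Set α} (ha : a ∈ F) : IsClosed (hat F a) :=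
  ⟨TopologicalSpace.GenerateOpen.basic _ ⟨a, ha, rfl⟩⟩

theorem hat_subset_iff (hF : GoodLat F) {a b : Set α} (ha : a ∈ F) (hb : b ∈ F) :
    hat F a ⊆ hat F b ↔ a ⊆ b := by
  constructor
  · intro h
    by_contra hab
    obtain ⟨c, hc, hne, hca, hcb⟩ := hF.disj a ha b hb hab
    obtain ⟨u, hu⟩ := exists_ultra hF {c} (by simpa using hc) (by
      intro t _ ht
      exact hne.mono (Set.subset_sInter fun s hs => by rw [ht hs]))
    have hcu := hu rfl
    have hbu : b ∈ u.sets := h (show a ∈ u.sets from u.superset_mem _ hcu _ ha hca)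
    have := u.inter_mem _ hcu _ hbu
    rw [hcb] at this
    exact u.empty_notMem this
  · intro h u hu
    exact u.superset_mem _ hu _ hb h

theorem hat_inter (hF : GoodLat F) {a b : Set α} (ha : a ∈ F) (hb : b ∈ F) :
    hat F (a ∩ b) = hat F a ∩ hat F b := by
  ext u
  exact u.inter_mem_iff ha hb

theorem hat_union (hF : GoodLat F) {a b : Set α} (ha : a ∈ F) (hb : b ∈ F) :
    hat F (a ∪ b) = hat F a ∪ hat F b := by
  ext u
  exact u.union_mem_iff hF ha hb

theorem hat_univ : hat F Set.univ = Set.univ := Set.eq_univ_of_forall fun u => u.univ_mem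

theorem hat_empty : hat F ∅ = ∅ := Set.eq_empty_of_forall_notMem fun u => u.empty_notMem

theorem compact_wallman (hF : GoodLat F) : CompactSpace (LUltra F) := by
  refine ⟨isCompact_generateFrom rfl fun P hP hcov => ?_⟩
  by_contra hcon
  push Not at hcon
  obtain ⟨u, hu⟩ := exists_ultra hF {a | a ∈ F ∧ (hat F a)ᶜ ∈ P} (fun a ha => ha.1) (by
    intro t ht htS
    by_contra hne
    rw [Set.not_nonempty_iff_eq_empty] at hne
    refine hcon ((fun a => (hat F a)ᶜ) '' t) ?_ (ht.image _) ?_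
    · rintro _ ⟨a, ha, rfl⟩
      exact (htS ha).2
    · intro u _
      by_contra hu
      have h1 : ∀ a ∈ t, a ∈ u.sets := by
        intro a ha
        by_contra hau
        exact hu ⟨_, ⟨a, ha, rfl⟩, hau⟩
      have h2 : ∀ t : Set (Set α), t.Finite → (∀ a ∈ t, a ∈ u.sets) → ⋂₀ t ∈ u.sets := by
        intro t ht
        induction t, ht using Set.Finite.induction_on with
        | empty => intro _; simpa using u.univ_mem
        | insert _ _ ih =>
          intro h
          rw [Set.sInter_insert]
          exact u.inter_mem _ (h _ (Set.mem_insert _ _)) _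
            (ih fun a ha => h _ (Set.mem_insert_of_mem _ ha))
      have := h2 t ht h1
      rw [hne] at this
      exact u.empty_notMem this)
  obtain ⟨s, hs, hus⟩ := hcov (Set.mem_univ u)
  obtain ⟨a, ha, rfl⟩ := hP hs
  exact hus (hu ⟨ha, hs⟩)

theorem t2_wallman (hF : GoodLat F) : T2Space (LUltra F) := by
  refine ⟨fun u v huv => ?_⟩
  have : ∃ a ∈ u.sets, a ∉ v.sets := by
    by_contra hcon
    push Not at hcon
    have h2 : v.sets ⊆ u.sets := by
      intro b hb
      by_contra hbu
      obtain ⟨c, hc, hbc⟩ := u.ultra b (v.sets_subset hb) hbu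
      have := v.inter_mem _ hb _ (hcon c hc)
      rw [hbc] at this
      exact v.empty_notMem this
    have h3 : u.sets = v.sets := Set.Subset.antisymm hcon h2
    cases u
    cases v
    cases h3
    exact huv rfl
  obtain ⟨a, hau, hav⟩ := this
  have haF := u.sets_subset hau
  obtain ⟨b, hbv, hab⟩ := v.ultra a haF hav
  obtain ⟨c, hc, d, hd, hcd, hac, hbd⟩ := hF.normal a haF b (v.sets_subset hbv) hab
  refine ⟨(hat F c)ᶜ, (hat F d)ᶜ, (isClosed_hat hc).isOpen_compl, (isClosed_hat hd).isOpen_compl,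
    fun h => ?_, fun h => ?_, ?_⟩
  · have := u.inter_mem _ hau _ h
    rw [hac] at this
    exact u.empty_notMem this
  · have := v.inter_mem _ hbv _ h
    rw [hbd] at this
    exact v.empty_notMem this
  · refine Set.disjoint_left.2 fun w h1 h2 => ?_
    have : w ∈ hat F (c ∪ d) := by rw [hcd, hat_univ]; trivial
    rw [hat_union hF hc hd] at this
    exact this.elim h1 h2

theorem closedBase_hat (hF : GoodLat F) : ClosedBase {s | ∃ a ∈ F, s = hat F a} := by
  refine ⟨?_, ⟨_, hF.univ_mem, hat_univ.symm⟩, ?_, ?_⟩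
  · rintro _ ⟨a, ha, rfl⟩
    exact isClosed_hat ha
  · rintro _ ⟨a, ha, rfl⟩ _ ⟨b, hb, rfl⟩
    exact ⟨_, hF.inter_mem _ ha _ hb, (hat_inter hF ha hb).symm⟩
  · have hbas : IsTopologicalBasis {s | ∃ a ∈ F, s = {u : LUltra F | a ∈ u.sets}ᶜ} := by
      refine ⟨?_, ?_, rfl⟩
      · rintro _ ⟨a, ha, rfl⟩ _ ⟨b, hb, rfl⟩ u hu
        have : (hat F a)ᶜ ∩ (hat F b)ᶜ = (hat F (a ∪ b))ᶜ := by
          rw [hat_union hF ha hb, Set.compl_union]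
        exact ⟨_, ⟨a ∪ b, hF.union_mem _ ha _ hb, rfl⟩, this.subset hu, this.superset⟩
      · refine Set.eq_univ_of_forall fun u => ⟨_, ⟨∅, hF.empty_mem, rfl⟩, u.empty_notMem⟩
    intro c hc u hu
    obtain ⟨_, ⟨a, ha, rfl⟩, hua, hac⟩ := hbas.exists_subset_of_mem_open hu hc.isOpen_compl
    refine ⟨hat F a, ⟨a, ha, rfl⟩, ?_, hua⟩
    intro v hv
    by_contra h
    exact hac h hv

/-- Points are omitted in the lattice iff they are omitted in the Wallman space. -/
theorem hat_iInter (hF : GoodLat F) {ι : Type} (s : Finset ι) (a : ι → Set α)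
    (ha : ∀ i, a i ∈ F) : (⋂ i ∈ s, a i) ∈ F ∧ hat F (⋂ i ∈ s, a i) = ⋂ i ∈ s, hat F (a i) := by
  classical
  induction s using Finset.induction_on with
  | empty => simpa [hat_univ] using hF.univ_mem
  | insert k s hk ih =>
    rw [Finset.set_biInter_insert, Finset.set_biInter_insert, hat_inter hF (ha k) ih.1, ih.2]
    exact ⟨hF.inter_mem _ (ha k) _ ih.1, rfl⟩

theorem hat_cover_iff (hF : GoodLat F) {ι : Type} (s : Finset ι) (a : ι → Set α)
    (ha : ∀ i, a i ∈ F) : (∀ u, ∃ i ∈ s, u ∉ hat F (a i)) ↔ ∀ x, ∃ i ∈ s, x ∉ a i := by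
  have h := hat_iInter hF s a ha
  have h2 : hat F (⋂ i ∈ s, a i) ⊆ hat F ∅ ↔ (⋂ i ∈ s, a i) ⊆ ∅ :=
    hat_subset_iff hF h.1 hF.empty_mem
  rw [hat_empty, h.2] at h2
  simpa [Set.subset_empty_iff, Set.eq_empty_iff_forall_notMem] using h2

theorem sol_hat_iff (hF : GoodLat F) (m n : ℕ) (a b : ℕ → Fin m → Set α)
    (ha : ∀ i j, a i j ∈ F) (hb : ∀ i j, b i j ∈ F) :
    Sol m n (fun i j => hat F (a i j)) (fun i j => hat F (b i j)) ↔ Sol m n a b := by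
  have key : ∀ {Y : Type u} (a b : ℕ → Fin m → Set Y), Sol m n a b ↔
      (∀ i < n, (∀ j, a i j ⊆ b i j) ∧ ∀ j k, j ≠ k → Set.univ ⊆ b i j ∪ b i k) ∧
      ∀ x, ∃ k ∈ Finset.range n ×ˢ (Finset.univ : Finset (Fin m)), x ∉ b k.1 k.2 := by
    intro Y a b
    constructor
    · intro h
      refine ⟨fun i hi => ⟨fun j x hx => ((h x).1 i hi).1 j hx, fun j k hjk x _ =>
        ((h x).1 i hi).2 j k hjk⟩, fun x => ?_⟩
      obtain ⟨i, hi, j, hx⟩ := (h x).2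
      exact ⟨(i, j), by simpa using hi, hx⟩
    · rintro ⟨h1, h2⟩ x
      refine ⟨fun i hi => ⟨fun j hx => (h1 i hi).1 j hx, fun j k hjk =>
        (h1 i hi).2 j k hjk trivial⟩, ?_⟩
      obtain ⟨k, hk, hx⟩ := h2 x
      exact ⟨k.1, by simpa using hk, k.2, hx⟩
  rw [key, key, hat_cover_iff hF _ (fun k : ℕ × Fin m => b k.1 k.2) (fun k => hb _ _)]
  refine and_congr ?_ Iff.rfl
  refine forall₂_congr fun i hi => and_congr (forall_congr' fun j =>
    hat_subset_iff hF (ha _ _) (hb _ _)) (forall₃_congr fun j k hjk => ?_)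
  rw [← hat_union hF (hb _ _) (hb _ _), ← hat_univ,
    hat_subset_iff hF hF.univ_mem (hF.union_mem _ (hb _ _) _ (hb _ _))]

theorem mC_wallman_iff (hF : GoodLat F) (m : ℕ) (hm : 0 < m) :
    IsMCSpace m (LUltra F) ↔ ∀ a : ℕ → Fin m → Set α, (∀ i j, a i j ∈ F) →
      (∀ i x, ∃ j, x ∉ a i j) →
      ∃ n, ∃ b : ℕ → Fin m → Set α, (∀ i j, b i j ∈ F) ∧ Sol m n a b := by
  have := compact_wallman hF
  rw [mC_iff (closedBase_hat hF) m hm]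
  have hc : ∀ a : Fin m → Set α, (∀ j, a j ∈ F) →
      ((∀ u, ∃ j, u ∉ hat F (a j)) ↔ ∀ x, ∃ j, x ∉ a j) := by
    intro a ha
    simpa using hat_cover_iff hF Finset.univ a ha
  constructor
  · intro h a ha hcov
    obtain ⟨n, b, hb, hsol⟩ := h (fun i j => hat F (a i j)) (fun i j => ⟨_, ha i j, rfl⟩)
      (fun i => (hc _ (ha i)).2 (hcov i))
    choose b' hb' hbb using hb
    have : b = fun i j => hat F (b' i j) := by
      funext i j
      exact hbb i j
    subst this
    exact ⟨n, b', hb', (sol_hat_iff hF m n a b' ha hb').1 hsol⟩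
  · intro h a ha hcov
    choose a' ha' haa using ha
    have : a = fun i j => hat F (a' i j) := by
      funext i j
      exact haa i j
    subst this
    obtain ⟨n, b, hb, hsol⟩ := h a' ha' (fun i => (hc _ (ha' i)).1 (hcov i))
    exact ⟨n, fun i j => hat F (b i j), fun i j => ⟨_, hb i j, rfl⟩,
      (sol_hat_iff hF m n a' b ha' hb).2 hsol⟩

end Wallman

/-! ### Definability with parameters in `M` -/

section Definability

variable {κ : Cardinal.{1}} (M : FirstOrder.Language.graph.ElementarySubstructure (HKappa κ))

/-- `P` is definable over `H(κ)` with parameters from `M`. -/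
def DefM {α : Type} (P : (α → HKappa κ) → Prop) : Prop :=
  ∃ φ : FirstOrder.Language.graph.Formula (M ⊕ α),
    ∀ v : α → HKappa κ, φ.Realize (Sum.elim (fun c : M => (c : HKappa κ)) v) ↔ P v

/-- `f` is a variable or a parameter from `M`. -/
def DTerm {α : Type} (f : (α → HKappa κ) → HKappa κ) : Prop :=
  (∃ a, f = fun v => v a) ∨ ∃ c ∈ M, f = fun _ => c

variable {M}

theorem DTerm.var {α : Type} (a : α) : DTerm M (fun v => v a) := Or.inl ⟨a, rfl⟩

theorem DTerm.const {α : Type} {c : HKappa κ} (hc : c ∈ M) :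
    DTerm (α := α) M (fun _ => c) := Or.inr ⟨c, hc, rfl⟩

theorem DTerm.lift {α β : Type} {f : (α → HKappa κ) → HKappa κ} (hf : DTerm M f) :
    DTerm (α := α ⊕ β) M (fun v => f (fun a => v (Sum.inl a))) := by
  rcases hf with ⟨a, rfl⟩ | ⟨c, hc, rfl⟩
  · exact DTerm.var _
  · exact DTerm.const hc

theorem DTerm.exists_term {α : Type} {f : (α → HKappa κ) → HKappa κ} (hf : DTerm M f) :
    ∃ t : FirstOrder.Language.graph.Term (M ⊕ α),
      ∀ v, t.realize (Sum.elim (fun c : M => (c : HKappa κ)) v) = f v := by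
  rcases hf with ⟨a, rfl⟩ | ⟨c, hc, rfl⟩
  · exact ⟨FirstOrder.Language.Term.var (Sum.inr a), fun v => rfl⟩
  · exact ⟨FirstOrder.Language.Term.var (Sum.inl ⟨c, hc⟩), fun v => rfl⟩

theorem DefM.mem {α : Type} {f g : (α → HKappa κ) → HKappa κ} (hf : DTerm M f)
    (hg : DTerm M g) : DefM M (fun v => (f v : ZFSet.{0}) ∈ (g v : ZFSet.{0})) := by
  obtain ⟨s, hs⟩ := hf.exists_term
  obtain ⟨t, ht⟩ := hg.exists_term
  refine ⟨FirstOrder.Language.Relations.formula₂ FirstOrder.Language.adj s t, fun v => ?_⟩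
  rw [FirstOrder.Language.Formula.realize_rel₂, hs, ht]
  exact Iff.rfl

theorem DefM.not {α : Type} {P : (α → HKappa κ) → Prop} (hP : DefM M P) :
    DefM M (fun v => ¬ P v) := by
  obtain ⟨φ, hφ⟩ := hP
  refine ⟨φ.not, fun v => ?_⟩
  rw [FirstOrder.Language.Formula.realize_not, hφ]

theorem DefM.imp {α : Type} {P Q : (α → HKappa κ) → Prop} (hP : DefM M P) (hQ : DefM M Q) :
    DefM M (fun v => P v → Q v) := by
  obtain ⟨φ, hφ⟩ := hP
  obtain ⟨ψ, hψ⟩ := hQ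
  refine ⟨φ.imp ψ, fun v => ?_⟩
  rw [FirstOrder.Language.Formula.realize_imp, hφ, hψ]

theorem DefM.and {α : Type} {P Q : (α → HKappa κ) → Prop} (hP : DefM M P) (hQ : DefM M Q) :
    DefM M (fun v => P v ∧ Q v) := by
  obtain ⟨φ, hφ⟩ := hP
  obtain ⟨ψ, hψ⟩ := hQ
  refine ⟨φ ⊓ ψ, fun v => ?_⟩
  rw [FirstOrder.Language.Formula.realize_inf, hφ, hψ]

theorem DefM.congr {α : Type} {P Q : (α → HKappa κ) → Prop} (hP : DefM M P)
    (h : ∀ v, P v ↔ Q v) : DefM M Q := by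
  obtain ⟨φ, hφ⟩ := hP
  exact ⟨φ, fun v => (hφ v).trans (h v)⟩

theorem DefM.or {α : Type} {P Q : (α → HKappa κ) → Prop} (hP : DefM M P) (hQ : DefM M Q) :
    DefM M (fun v => P v ∨ Q v) :=
  (hP.not.imp hQ).congr fun v => by tauto

theorem DefM.iff {α : Type} {P Q : (α → HKappa κ) → Prop} (hP : DefM M P) (hQ : DefM M Q) :
    DefM M (fun v => P v ↔ Q v) :=
  ((hP.imp hQ).and (hQ.imp hP)).congr fun v => by tauto

theorem DefM.triv {α : Type} (p : Prop) : DefM (α := α) M (fun _ => p) := by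
  by_cases hp : p
  · exact ⟨⊤, fun v => by simp [hp]⟩
  · exact ⟨⊥, fun v => by simp [hp]⟩

theorem DefM.exs {α β : Type} [Finite β] {P : (α → HKappa κ) → (β → HKappa κ) → Prop}
    (hP : DefM (α := α ⊕ β) M (fun v => P (fun a => v (Sum.inl a)) (fun b => v (Sum.inr b)))) :
    DefM M (fun v => ∃ w, P v w) := by
  obtain ⟨φ, hφ⟩ := hP
  let e : M ⊕ (α ⊕ β) → (M ⊕ α) ⊕ β := (Equiv.sumAssoc _ _ _).symm
  refine ⟨(φ.relabel e).iExs β, fun v => ?_⟩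
  rw [FirstOrder.Language.Formula.realize_iExs]
  refine exists_congr fun w => ?_
  rw [FirstOrder.Language.Formula.realize_relabel]
  refine Iff.trans ?_ (hφ (Sum.elim v w))
  have : (fun a => Sum.elim (Sum.elim (fun c : M => (c : HKappa κ)) v) w a) ∘ e =
    Sum.elim (fun c : M => (c : HKappa κ)) (Sum.elim v w) := by
    funext x
    rcases x with c | a | b <;> rfl
  exact iff_of_eq (congrArg _ this)

theorem DefM.alls {α β : Type} [Finite β] {P : (α → HKappa κ) → (β → HKappa κ) → Prop}
    (hP : DefM (α := α ⊕ β) M (fun v => P (fun a => v (Sum.inl a)) (fun b => v (Sum.inr b)))) :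
    DefM M (fun v => ∀ w, P v w) :=
  (DefM.exs (P := fun v w => ¬ P v w) hP.not).not.congr fun v => by simp

theorem DefM.ex {α : Type} {P : (α → HKappa κ) → HKappa κ → Prop}
    (hP : DefM (α := α ⊕ Unit) M (fun v => P (fun a => v (Sum.inl a)) (v (Sum.inr ())))) :
    DefM M (fun v => ∃ x, P v x) :=
  (DefM.exs (β := Unit) (P := fun v w => P v (w ())) hP).congr fun _ =>
    ⟨fun ⟨w, hw⟩ => ⟨_, hw⟩, fun ⟨x, hx⟩ => ⟨fun _ => x, hx⟩⟩

theorem DefM.all {α : Type} {P : (α → HKappa κ) → HKappa κ → Prop}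
    (hP : DefM (α := α ⊕ Unit) M (fun v => P (fun a => v (Sum.inl a)) (v (Sum.inr ())))) :
    DefM M (fun v => ∀ x, P v x) :=
  (DefM.ex (P := fun v w => ¬ P v w) hP.not).not.congr fun v => by simp

theorem DefM.finAll {α : Type} {ι : Type*} [Finite ι] {P : ι → (α → HKappa κ) → Prop}
    (hP : ∀ i, DefM M (P i)) : DefM M (fun v => ∀ i, P i v) := by
  classical
  have := Fintype.ofFinite ι
  have key : ∀ s : Finset ι, DefM M (fun v => ∀ i ∈ s, P i v) := by
    intro s
    induction s using Finset.induction_on with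
    | empty => exact (DefM.triv True).congr fun v => by simp
    | insert k s hk ih => exact ((hP k).and ih).congr fun v => by simp
  exact (key Finset.univ).congr fun v => by simp

theorem DefM.finEx {α : Type} {ι : Type*} [Finite ι] {P : ι → (α → HKappa κ) → Prop}
    (hP : ∀ i, DefM M (P i)) : DefM M (fun v => ∃ i, P i v) :=
  (DefM.finAll fun i => (hP i).not).not.congr fun v => by simp

/-- Any propositional combination of finitely many definable predicates is definable. -/
theorem DefM.bool {α ι : Type} [Finite ι] {P : ι → (α → HKappa κ) → Prop}
    (hP : ∀ i, DefM M (P i)) (R : (ι → Prop) → Prop) :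
    DefM M (fun v => R (fun i => P i v)) := by
  have h : DefM M (fun v => ∃ s : {s : ι → Prop // R s}, ∀ i, (P i v ↔ s.1 i)) :=
    DefM.finEx fun s => DefM.finAll fun i => (hP i).iff (DefM.triv _)
  refine h.congr fun v => ⟨?_, fun h => ⟨⟨_, h⟩, fun i => Iff.rfl⟩⟩
  rintro ⟨s, hs⟩
  have : (fun i => P i v) = s.1 := funext fun i => propext (hs i)
  rw [this]
  exact s.2

/-- Elementarity: a definable nonempty family of finite tuples has a member in `M`. -/
theorem DefM.reflect {β : Type} [Finite β] {P : (β → HKappa κ) → Prop} (hP : DefM M P)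
    (h : ∃ w, P w) : ∃ w : β → HKappa κ, (∀ b, w b ∈ M) ∧ P w := by
  obtain ⟨φ, hφ⟩ := hP
  have h1 : (φ.iExs β).Realize (fun c : M => (c : HKappa κ)) := by
    rw [FirstOrder.Language.Formula.realize_iExs]
    obtain ⟨w, hw⟩ := h
    exact ⟨w, (hφ w).2 hw⟩
  have h2 : (φ.iExs β).Realize (fun c : M => c) := (M.subtype.map_formula _ _).1 h1
  rw [FirstOrder.Language.Formula.realize_iExs] at h2
  obtain ⟨w, hw⟩ := h2
  refine ⟨fun b => w b, fun b => (w b).2, (hφ _).1 ?_⟩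
  have h3 := (M.subtype.map_formula _ _).2 hw
  have : M.subtype ∘ (fun a => Sum.elim (fun c : M => c) w a) =
      Sum.elim (fun c : M => (c : HKappa κ)) (fun b => (w b : HKappa κ)) := by
    funext x
    rcases x with c | b <;> rfl
  exact (iff_of_eq (congrArg _ this)).1 h3

end Definability

/-! ### Sets -/

theorem heredLt_iff (κ : Cardinal.{1}) (x : ZFSet.{0}) :
    HeredLt κ x ↔ Cardinal.mk x.toSet < κ ∧ ∀ y ∈ x, HeredLt κ y := by
  unfold HeredLt
  rw [WellFounded.fix_eq]

theorem heredLt_mem {κ : Cardinal.{1}} {x y : ZFSet.{0}} (hx : HeredLt κ x) (h : y ∈ x) :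
    HeredLt κ y := ((heredLt_iff κ x).1 hx).2 y h

theorem heredLt_subset {κ : Cardinal.{1}} {x y : ZFSet.{0}} (hx : HeredLt κ x) (h : y ⊆ x) :
    HeredLt κ y := by
  rw [heredLt_iff] at hx ⊢
  exact ⟨(Cardinal.mk_le_mk_of_subset (fun z hz => h hz)).trans_lt hx.1, fun z hz => hx.2 z (h hz)⟩

theorem mem_codeSet {X : ZFSet.{0}} {A : Set ↥X.toSet} {y : ZFSet.{0}} :
    y ∈ codeSet X A ↔ ∃ h : y ∈ X.toSet, (⟨y, h⟩ : ↥X.toSet) ∈ A := by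
  unfold codeSet
  rw [ZFSet.mem_sep]
  exact ⟨fun h => h.2, fun h => ⟨h.1, h⟩⟩

theorem codeSet_subset {X : ZFSet.{0}} (A : Set ↥X.toSet) : codeSet X A ⊆ X := fun _ hy =>
  (mem_codeSet.1 hy).1

theorem val_mem_codeSet {X : ZFSet.{0}} {A : Set ↥X.toSet} {p : ↥X.toSet} :
    (p : ZFSet.{0}) ∈ codeSet X A ↔ p ∈ A := by
  rw [mem_codeSet]
  exact ⟨fun h => h.2, fun h => ⟨p.2, h⟩⟩

theorem decode_code {X : ZFSet.{0}} (A : Set ↥X.toSet) : decodeSet X (codeSet X A) = A := by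
  ext p
  exact val_mem_codeSet

theorem code_decode {X t : ZFSet.{0}} (ht : t ⊆ X) : codeSet X (decodeSet X t) = t := by
  ext y
  rw [mem_codeSet]
  exact ⟨fun h => h.2, fun h => ⟨ht h, h⟩⟩

/-- The set of codes of closed sets. -/
noncomputable def closedZ (X : ZFSet.{0}) [TopologicalSpace ↥X.toSet] : ZFSet.{0} :=
  ZFSet.sep (fun t => IsClosed (decodeSet X t)) X.powerset

theorem mem_closedZ {X : ZFSet.{0}} [TopologicalSpace ↥X.toSet] {t : ZFSet.{0}} :
    t ∈ closedZ X ↔ t ⊆ X ∧ IsClosed (decodeSet X t) := by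
  unfold closedZ
  rw [ZFSet.mem_sep, ZFSet.mem_powerset]

theorem mem_opensZ {X : ZFSet.{0}} [TopologicalSpace ↥X.toSet] {t : ZFSet.{0}} :
    t ∈ opensZ X ↔ t ⊆ X ∧ IsOpen (decodeSet X t) := by
  unfold opensZ
  rw [ZFSet.mem_sep, ZFSet.mem_powerset]

theorem code_mem_closedZ {X : ZFSet.{0}} [TopologicalSpace ↥X.toSet] {A : Set ↥X.toSet} :
    codeSet X A ∈ closedZ X ↔ IsClosed A := by
  rw [mem_closedZ, decode_code]
  exact ⟨fun h => h.2, fun h => ⟨codeSet_subset A, h⟩⟩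

section Main

variable {X : ZFSet.{0}} {κ : Cardinal.{1}}

theorem heredLt_of_mem_or_subset (hbig : HeredLt κ X.powerset.powerset) :
    HeredLt κ X.powerset ∧ HeredLt κ X := by
  have h1 : HeredLt κ X.powerset := heredLt_mem hbig (ZFSet.mem_powerset.2 (fun _ h => h))
  exact ⟨h1, heredLt_mem h1 (ZFSet.mem_powerset.2 (fun _ h => h))⟩

theorem HKappa_mem {x : HKappa κ} {y : ZFSet.{0}} (h : y ∈ (x : ZFSet.{0})) : y ∈ HKappa κ :=
  heredLt_mem x.2 h

/-- The code of a subset of `X` as an element of `H(κ)`. -/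
noncomputable def cH (hbig : HeredLt κ X.powerset.powerset) (A : Set ↥X.toSet) : HKappa κ :=
  ⟨codeSet X A, heredLt_subset (heredLt_of_mem_or_subset hbig).2 (codeSet_subset A)⟩

variable [TopologicalSpace ↥X.toSet]
  {M : FirstOrder.Language.graph.ElementarySubstructure (HKappa κ)}

theorem closedZ_memOf (hbig : HeredLt κ X.powerset.powerset) (hXM : MemOf κ M X)
    (htopM : MemOf κ M (opensZ X)) : MemOf κ M (closedZ X) := by
  obtain ⟨hXH, hXM⟩ := hXM
  obtain ⟨hTH, hTM⟩ := htopM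
  have hCH : HeredLt κ (closedZ X) := heredLt_subset (heredLt_of_mem_or_subset hbig).1
    (fun t ht => ZFSet.mem_powerset.2 (mem_closedZ.1 ht).1)
  have hdef : DefM (α := Unit) M (fun w => ∀ x : HKappa κ, (x : ZFSet.{0}) ∈ (w () : ZFSet.{0}) ↔
      ∃ t : HKappa κ, (t : ZFSet.{0}) ∈ ((⟨opensZ X, hTH⟩ : HKappa κ) : ZFSet.{0}) ∧
        ∀ y : HKappa κ, (y : ZFSet.{0}) ∈ (x : ZFSet.{0}) ↔
          ((y : ZFSet.{0}) ∈ ((⟨X, hXH⟩ : HKappa κ) : ZFSet.{0}) ∧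
            ¬ (y : ZFSet.{0}) ∈ (t : ZFSet.{0}))) :=
    DefM.all (DefM.iff (DefM.mem (DTerm.var _) (DTerm.var _))
      (DefM.ex (DefM.and (DefM.mem (DTerm.var _) (DTerm.const hTM))
        (DefM.all (DefM.iff (DefM.mem (DTerm.var _) (DTerm.var _))
          (DefM.and (DefM.mem (DTerm.var _) (DTerm.const hXM))
            (DefM.not (DefM.mem (DTerm.var _) (DTerm.var _)))))))))
  have key : ∀ x : HKappa κ, (x : ZFSet.{0}) ∈ closedZ X ↔
      ∃ t : HKappa κ, (t : ZFSet.{0}) ∈ opensZ X ∧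
        ∀ y : HKappa κ, (y : ZFSet.{0}) ∈ (x : ZFSet.{0}) ↔
          ((y : ZFSet.{0}) ∈ X ∧ ¬ (y : ZFSet.{0}) ∈ (t : ZFSet.{0})) := by
    intro x
    constructor
    · intro hx
      obtain ⟨hxX, hxc⟩ := mem_closedZ.1 hx
      refine ⟨cH hbig (decodeSet X x)ᶜ, ?_, fun y => ?_⟩
      · refine mem_opensZ.2 ⟨codeSet_subset _, ?_⟩
        rw [cH, decode_code]
        exact hxc.isOpen_compl
      · constructor
        · intro hy
          refine ⟨hxX hy, fun h => ?_⟩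
          obtain ⟨h1, h2⟩ := mem_codeSet.1 h
          exact h2 hy
        · rintro ⟨hy, hyt⟩
          by_contra hyx
          exact hyt (mem_codeSet.2 ⟨hy, hyx⟩)
    · rintro ⟨t, ht, hxt⟩
      obtain ⟨htX, hto⟩ := mem_opensZ.1 ht
      refine mem_closedZ.2 ⟨fun y hy => ((hxt ⟨y, HKappa_mem hy⟩).1 hy).1, ?_⟩
      have : decodeSet X x = (decodeSet X t)ᶜ := by
        ext p
        refine (hxt ⟨p, heredLt_mem hXH p.2⟩).trans ⟨fun h => h.2, fun h => ⟨p.2, h⟩⟩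
      rw [this]
      exact hto.isClosed_compl
  obtain ⟨w, hwM, hw⟩ := hdef.reflect ⟨fun _ => ⟨closedZ X, hCH⟩, key⟩
  have : w () = ⟨closedZ X, hCH⟩ := by
    refine Subtype.ext (ZFSet.ext fun z => ⟨fun hz => ?_, fun hz => ?_⟩)
    · exact (key ⟨z, HKappa_mem hz⟩).2 ((hw ⟨z, HKappa_mem hz⟩).1 hz)
    · exact (hw ⟨z, heredLt_mem hCH hz⟩).2 ((key ⟨z, heredLt_mem hCH hz⟩).1 hz)
  exact ⟨hCH, this ▸ hwM ()⟩

theorem mem_Lfam_of {t : HKappa κ} (htM : t ∈ M) (ht : (t : ZFSet.{0}) ∈ closedZ X) :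
    decodeSet X t ∈ Lfam X κ M := by
  obtain ⟨htX, htc⟩ := mem_closedZ.1 ht
  refine ⟨htc, ?_⟩
  rw [code_decode htX]
  exact ⟨t.2, htM⟩

theorem cH_mem_of (hbig : HeredLt κ X.powerset.powerset) {A : Set ↥X.toSet}
    (hA : A ∈ Lfam X κ M) : cH hbig A ∈ M := hA.2.2

/-- Elementarity for pointwise relations between closed sets. -/
theorem pointwise_elem (hbig : HeredLt κ X.powerset.powerset) (hXM : MemOf κ M X)
    (htopM : MemOf κ M (opensZ X)) {ι β : Type} [Finite ι] [Finite β]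
    (a : ι → Set ↥X.toSet) (ha : ∀ i, a i ∈ Lfam X κ M)
    (R : (ι → Prop) → (β → Prop) → Prop) (N : β → Prop)
    (h : ∃ b : β → Set ↥X.toSet, (∀ j, IsClosed (b j)) ∧
      (∀ x, R (fun i => x ∈ a i) (fun j => x ∈ b j)) ∧ ∀ j, N j → (b j).Nonempty) :
    ∃ b : β → Set ↥X.toSet, (∀ j, b j ∈ Lfam X κ M) ∧
      (∀ x, R (fun i => x ∈ a i) (fun j => x ∈ b j)) ∧ ∀ j, N j → (b j).Nonempty := by
  obtain ⟨hCH, hCM⟩ := closedZ_memOf hbig hXM htopM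
  obtain ⟨hXH, hXM⟩ := hXM
  have hR : DefM (α := β ⊕ Unit) M (fun v => R
      (fun i => (v (Sum.inr ()) : ZFSet.{0}) ∈ (cH hbig (a i) : ZFSet.{0}))
      (fun j => (v (Sum.inr ()) : ZFSet.{0}) ∈ (v (Sum.inl j) : ZFSet.{0}))) := by
    refine DefM.bool (ι := ι ⊕ β) (P := fun k v => Sum.elim
      (fun i => (v (Sum.inr ()) : ZFSet.{0}) ∈ (cH hbig (a i) : ZFSet.{0}))
      (fun j => (v (Sum.inr ()) : ZFSet.{0}) ∈ (v (Sum.inl j) : ZFSet.{0})) k) ?_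
      (fun s => R (fun i => s (Sum.inl i)) (fun j => s (Sum.inr j)))
    rintro (i | j)
    · exact DefM.mem (DTerm.var _) (DTerm.const (cH_mem_of hbig (ha i)))
    · exact DefM.mem (DTerm.var _) (DTerm.var _)
  have hdef : DefM (α := β) M (fun w =>
      (∀ j, (w j : ZFSet.{0}) ∈ ((⟨closedZ X, hCH⟩ : HKappa κ) : ZFSet.{0})) ∧
      (∀ y : HKappa κ, (y : ZFSet.{0}) ∈ ((⟨X, hXH⟩ : HKappa κ) : ZFSet.{0}) →
        R (fun i => (y : ZFSet.{0}) ∈ (cH hbig (a i) : ZFSet.{0}))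
          (fun j => (y : ZFSet.{0}) ∈ (w j : ZFSet.{0}))) ∧
      ∀ j, N j → ∃ y : HKappa κ, (y : ZFSet.{0}) ∈ (w j : ZFSet.{0})) :=
    DefM.and (DefM.finAll fun j => DefM.mem (DTerm.var _) (DTerm.const hCM))
      (DefM.and (DefM.all (DefM.imp (DefM.mem (DTerm.var _) (DTerm.const hXM)) hR))
        (DefM.finAll fun j => DefM.imp (DefM.triv _)
          (DefM.ex (DefM.mem (DTerm.var _) (DTerm.var _)))))
  obtain ⟨w, hwM, hwC, hwR, hwN⟩ := hdef.reflect (by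
    obtain ⟨b, hb, hbR, hbN⟩ := h
    refine ⟨fun j => cH hbig (b j), fun j => code_mem_closedZ.2 (hb j), fun y hy => ?_,
      fun j hj => ?_⟩
    · have := hbR ⟨y, hy⟩
      convert this using 2
      · exact val_mem_codeSet (p := ⟨_, hy⟩)
      · exact val_mem_codeSet (p := ⟨_, hy⟩)
    · obtain ⟨p, hp⟩ := hbN j hj
      exact ⟨⟨p, heredLt_mem hXH p.2⟩, val_mem_codeSet.2 hp⟩)
  refine ⟨fun j => decodeSet X (w j), fun j => mem_Lfam_of (hwM j) (hwC j), fun x => ?_,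
    fun j hj => ?_⟩
  · have := hwR ⟨x, heredLt_mem hXH x.2⟩ x.2
    convert this using 2
    · exact val_mem_codeSet.symm
    · exact Iff.rfl
  · obtain ⟨y, hy⟩ := hwN j hj
    exact ⟨⟨y, (mem_closedZ.1 (hwC j)).1 hy⟩, hy⟩

theorem goodLat_Lfam [CompactSpace ↥X.toSet] [T2Space ↥X.toSet]
    (hbig : HeredLt κ X.powerset.powerset) (hXM : MemOf κ M X)
    (htopM : MemOf κ M (opensZ X)) : GoodLat (Lfam X κ M) := by
  have E := fun {ι β : Type} [Finite ι] [Finite β] =>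
    pointwise_elem (ι := ι) (β := β) hbig hXM htopM
  refine ⟨?_, ?_, ?_, ?_, ?_, ?_⟩
  · obtain ⟨b, hb, hR, -⟩ := E (ι := Empty) (β := Unit) (fun i => i.elim) (fun i => i.elim)
      (fun _ q => q ()) (fun _ => False) ⟨fun _ => Set.univ, fun _ => isClosed_univ,
        fun _ => trivial, fun _ h => h.elim⟩
    rw [← Set.eq_univ_of_forall hR]
    exact hb ()
  · obtain ⟨b, hb, hR, -⟩ := E (ι := Empty) (β := Unit) (fun i => i.elim) (fun i => i.elim)
      (fun _ q => ¬ q ()) (fun _ => False) ⟨fun _ => ∅, fun _ => isClosed_empty,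
        fun _ h => h, fun _ h => h.elim⟩
    rw [← Set.eq_empty_of_forall_notMem hR]
    exact hb ()
  · intro a ha b hb
    obtain ⟨c, hc, hR, -⟩ := E (ι := Bool) (β := Unit) (fun i => if i then a else b)
      (fun i => by cases i <;> simpa)
      (fun p q => q () ↔ p true ∧ p false) (fun _ => False) ⟨fun _ => a ∩ b,
        fun _ => ha.1.inter hb.1, fun _ => Iff.rfl, fun _ h => h.elim⟩
    have : a ∩ b = c () := Set.ext fun x => (hR x).symm
    rw [this]
    exact hc ()
  · intro a ha b hb
    obtain ⟨c, hc, hR, -⟩ := E (ι := Bool) (β := Unit) (fun i => if i then a else b)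
      (fun i => by cases i <;> simpa)
      (fun p q => q () ↔ p true ∨ p false) (fun _ => False) ⟨fun _ => a ∪ b,
        fun _ => ha.1.union hb.1, fun _ => Iff.rfl, fun _ h => h.elim⟩
    have : a ∪ b = c () := Set.ext fun x => (hR x).symm
    rw [this]
    exact hc ()
  · intro a ha b hb hab
    obtain ⟨x, hxa, hxb⟩ := Set.not_subset.1 hab
    obtain ⟨c, hc, hR, hN⟩ := E (ι := Bool) (β := Unit) (fun i => if i then a else b)
      (fun i => by cases i <;> simpa)
      (fun p q => q () → p true ∧ ¬ p false) (fun _ => True) ⟨fun _ => {x},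
        fun _ => isClosed_singleton, fun y hy => by
          have hy : y = x := hy
          subst hy
          exact ⟨hxa, hxb⟩, fun _ _ => Set.singleton_nonempty x⟩
    refine ⟨c (), hc (), hN () trivial, fun y hy => (hR y hy).1, ?_⟩
    exact Set.eq_empty_of_forall_notMem fun y hy => (hR y hy.1).2 hy.2
  · intro a ha b hb hab
    obtain ⟨P, Q, hP, hQ, haP, hbQ, hPQ⟩ := NormalSpace.normal a b ha.1 hb.1
      (Set.disjoint_iff_inter_eq_empty.2 hab)
    have hx : ∀ x, (x ∈ Pᶜ ∨ x ∈ Qᶜ) ∧ ¬ (x ∈ a ∧ x ∈ Pᶜ) ∧ ¬ (x ∈ b ∧ x ∈ Qᶜ) := by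
      intro x
      refine ⟨?_, fun h => h.2 (haP h.1), fun h => h.2 (hbQ h.1)⟩
      by_contra hcon
      simp only [not_or] at hcon
      exact Set.disjoint_left.1 hPQ (not_not.1 hcon.1) (not_not.1 hcon.2)
    obtain ⟨c, hc, hR, -⟩ := E (ι := Bool) (β := Bool) (fun i => if i then a else b)
      (fun i => by cases i <;> simpa)
      (fun p q => (q true ∨ q false) ∧ ¬ (p true ∧ q true) ∧ ¬ (p false ∧ q false))
      (fun _ => False) ⟨fun i => if i then Pᶜ else Qᶜ,
        fun i => by
          cases i
          · simpa using hQ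
          · simpa using hP, fun x => hx x, fun _ h => h.elim⟩
    exact ⟨c true, hc _, c false, hc _, Set.eq_univ_of_forall fun x => (hR x).1,
      Set.eq_empty_of_forall_notMem fun x => (hR x).2.1,
      Set.eq_empty_of_forall_notMem fun x => (hR x).2.2⟩

theorem sol_elem (hbig : HeredLt κ X.powerset.powerset) (hXM : MemOf κ M X)
    (htopM : MemOf κ M (opensZ X)) (m n : ℕ) (a b : ℕ → Fin m → Set ↥X.toSet)
    (ha : ∀ i j, a i j ∈ Lfam X κ M) (hb : ∀ i j, IsClosed (b i j)) (h : Sol m n a b)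
    (huniv : Set.univ ∈ Lfam X κ M) :
    ∃ b : ℕ → Fin m → Set ↥X.toSet, (∀ i j, b i j ∈ Lfam X κ M) ∧ Sol m n a b := by
  obtain ⟨c, hc, hR, -⟩ := pointwise_elem hbig hXM htopM (ι := Fin n × Fin m)
    (β := Fin n × Fin m) (fun k => a k.1 k.2) (fun k => ha _ _)
    (fun p q => (∀ i : Fin n, (∀ j, p (i, j) → q (i, j)) ∧ ∀ j k, j ≠ k → q (i, j) ∨ q (i, k)) ∧
      ∃ i : Fin n, ∃ j, ¬ q (i, j)) (fun _ => False)
    ⟨fun k => b k.1 k.2, fun k => hb _ _, fun x => ⟨fun i => (h x).1 i i.2, by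
      obtain ⟨i, hi, j, hx⟩ := (h x).2
      exact ⟨⟨i, hi⟩, j, hx⟩⟩, fun _ h => h.elim⟩
  refine ⟨fun i j => if hi : i < n then c (⟨i, hi⟩, j) else Set.univ, fun i j => ?_, fun x => ?_⟩
  · dsimp only
    split_ifs
    · exact hc _
    · exact huniv
  · refine ⟨fun i hi => ?_, ?_⟩
    · simpa [hi] using (hR x).1 ⟨i, hi⟩
    · obtain ⟨i, j, hx⟩ := (hR x).2
      exact ⟨i, i.2, j, by simpa using hx⟩

/-- One step of the game: from the state `O` one can move to the state `O'` by playing `a`. -/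
def Step (Xh C : HKappa κ) (m : ℕ) (Z O : HKappa κ) (a : Fin m → HKappa κ) (O' : HKappa κ) :
    Prop :=
  (∀ j, (a j : ZFSet.{0}) ∈ (C : ZFSet.{0})) ∧
  (∀ y : HKappa κ, (y : ZFSet.{0}) ∈ (Xh : ZFSet.{0}) →
    ∃ j, ¬ (y : ZFSet.{0}) ∈ (a j : ZFSet.{0})) ∧
  (O' : ZFSet.{0}) ∈ (Z : ZFSet.{0}) ∧
  ∀ c : HKappa κ, (c : ZFSet.{0}) ∈ (O : ZFSet.{0}) → ∀ b : Fin m → HKappa κ,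
    (∀ j, (b j : ZFSet.{0}) ∈ (C : ZFSet.{0})) →
    (∀ y : HKappa κ, (y : ZFSet.{0}) ∈ (Xh : ZFSet.{0}) →
      (∀ j, (y : ZFSet.{0}) ∈ (a j : ZFSet.{0}) → (y : ZFSet.{0}) ∈ (b j : ZFSet.{0})) ∧
      ∀ j k, j ≠ k → (y : ZFSet.{0}) ∈ (b j : ZFSet.{0}) ∨ (y : ZFSet.{0}) ∈ (b k : ZFSet.{0})) →
    ∀ c' : HKappa κ, (c' : ZFSet.{0}) ∈ (C : ZFSet.{0}) →
      (∀ y : HKappa κ, (y : ZFSet.{0}) ∈ (c' : ZFSet.{0}) ↔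
        ((y : ZFSet.{0}) ∈ (c : ZFSet.{0}) ∧ ∀ j, (y : ZFSet.{0}) ∈ (b j : ZFSet.{0}))) →
      (c' : ZFSet.{0}) ∈ (O' : ZFSet.{0})

theorem step_def {α : Type} {Xh C : HKappa κ} (hX : Xh ∈ M) (hC : C ∈ M) (m : ℕ)
    {fZ fO fO' : (α → HKappa κ) → HKappa κ} {fa : Fin m → (α → HKappa κ) → HKappa κ}
    (hZ : DTerm M fZ) (hO : DTerm M fO) (hO' : DTerm M fO') (ha : ∀ j, DTerm M (fa j)) :
    DefM M (fun v => Step Xh C m (fZ v) (fO v) (fun j => fa j v) (fO' v)) := by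
  unfold Step
  refine DefM.and (DefM.finAll fun j => DefM.mem (ha j) (DTerm.const hC)) (DefM.and
    (DefM.all (DefM.imp (DefM.mem (DTerm.var _) (DTerm.const hX))
      (DefM.finEx fun j => DefM.not (DefM.mem (DTerm.var _) (ha j).lift)))) (DefM.and
    (DefM.mem hO' hZ) (DefM.all (DefM.imp (DefM.mem (DTerm.var _) hO.lift) (DefM.alls
      (DefM.imp (DefM.finAll fun j => DefM.mem (DTerm.var _) (DTerm.const hC)) (DefM.imp
        (DefM.all (DefM.imp (DefM.mem (DTerm.var _) (DTerm.const hX)) (DefM.and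
          (DefM.finAll fun j => DefM.imp (DefM.mem (DTerm.var _) (ha j).lift.lift.lift)
            (DefM.mem (DTerm.var _) (DTerm.var _)))
          (DefM.finAll fun j => DefM.finAll fun k => DefM.imp (DefM.triv _)
            (DefM.or (DefM.mem (DTerm.var _) (DTerm.var _))
              (DefM.mem (DTerm.var _) (DTerm.var _)))))))
        (DefM.all (DefM.imp (DefM.mem (DTerm.var _) (DTerm.const hC)) (DefM.imp
          (DefM.all (DefM.iff (DefM.mem (DTerm.var _) (DTerm.var _)) (DefM.and
            (DefM.mem (DTerm.var _) (DTerm.var _))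
            (DefM.finAll fun j => DefM.mem (DTerm.var _) (DTerm.var _)))))
          (DefM.mem (DTerm.var _) hO'.lift.lift.lift)))))))))))

/-- Partial solutions. -/
def PSol {Y : Type u} (m n : ℕ) (a b : ℕ → Fin m → Set Y) : Prop :=
  ∀ i < n, ∀ x, (∀ j, x ∈ a i j → x ∈ b i j) ∧ ∀ j k, j ≠ k → x ∈ b i j ∨ x ∈ b i k

/-- The set not covered by a partial solution. -/
def rest {Y : Type u} {m : ℕ} (n : ℕ) (b : ℕ → Fin m → Set Y) : Set Y :=
  {x | ∀ i < n, ∀ j, x ∈ b i j}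

theorem isClosed_rest {Y : Type u} [TopologicalSpace Y] {m : ℕ} (n : ℕ) (b : ℕ → Fin m → Set Y)
    (hb : ∀ i j, IsClosed (b i j)) : IsClosed (rest n b) := by
  have : rest n b = ⋂ i, ⋂ (_ : i < n), ⋂ j, b i j := by
    ext x
    simp [rest]
  rw [this]
  exact isClosed_iInter fun i => isClosed_iInter fun _ => isClosed_iInter fun j => hb i j

theorem sol_iff {Y : Type u} (m n : ℕ) (a b : ℕ → Fin m → Set Y) :
    Sol m n a b ↔ PSol m n a b ∧ ¬ (rest n b).Nonempty := by
  constructor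
  · refine fun h => ⟨fun i hi x => (h x).1 i hi, ?_⟩
    rintro ⟨x, hx⟩
    obtain ⟨i, hi, j, hxj⟩ := (h x).2
    exact hxj (hx i hi j)
  · rintro ⟨h1, h2⟩ x
    refine ⟨fun i hi => h1 i hi x, ?_⟩
    by_contra hcon
    push Not at hcon
    exact h2 ⟨x, hcon⟩

/-- The `n`-th state. -/
noncomputable def stateZ (X : ZFSet.{0}) [TopologicalSpace ↥X.toSet] {m : ℕ}
    (a : ℕ → Fin m → Set ↥X.toSet) (n : ℕ) : ZFSet.{0} :=
  ZFSet.sep (fun t => ∃ b : ℕ → Fin m → Set ↥X.toSet, (∀ i j, IsClosed (b i j)) ∧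
    PSol m n a b ∧ t = codeSet X (rest n b)) X.powerset

theorem mem_stateZ {m : ℕ} {a : ℕ → Fin m → Set ↥X.toSet} {n : ℕ} {t : ZFSet.{0}} :
    t ∈ stateZ X a n ↔ ∃ b : ℕ → Fin m → Set ↥X.toSet, (∀ i j, IsClosed (b i j)) ∧
    PSol m n a b ∧ t = codeSet X (rest n b) := by
  unfold stateZ
  rw [ZFSet.mem_sep, ZFSet.mem_powerset]
  refine ⟨fun h => h.2, fun h => ⟨?_, h⟩⟩
  obtain ⟨b, _, _, rfl⟩ := h
  exact codeSet_subset _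

theorem bad_elem (hbig : HeredLt κ X.powerset.powerset) (hXM : MemOf κ M X)
    (htopM : MemOf κ M (opensZ X)) (m : ℕ) (a : ℕ → Fin m → Set ↥X.toSet)
    (ha : ∀ i j, IsClosed (a i j)) (hcov : ∀ i x, ∃ j, x ∉ a i j)
    (hbad : ∀ n b, (∀ i j, IsClosed (b i j)) → ¬ Sol m n a b) :
    ∃ a : ℕ → Fin m → Set ↥X.toSet, (∀ i j, a i j ∈ Lfam X κ M) ∧ (∀ i x, ∃ j, x ∉ a i j) ∧
      ∀ n b, (∀ i j, IsClosed (b i j)) → ¬ Sol m n a b := by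
  obtain ⟨hCH, hCM⟩ := closedZ_memOf hbig hXM htopM
  obtain ⟨hXH, hXM⟩ := hXM
  set C : HKappa κ := ⟨closedZ X, hCH⟩ with hC
  set Xh : HKappa κ := ⟨X, hXH⟩ with hXh
  -- the formula
  have hdef : DefM (α := Unit) M (fun w =>
      (∃ O : HKappa κ, (O : ZFSet.{0}) ∈ (w () : ZFSet.{0}) ∧ (Xh : ZFSet.{0}) ∈ (O : ZFSet.{0})) ∧
      ∀ O : HKappa κ, (O : ZFSet.{0}) ∈ (w () : ZFSet.{0}) →
        (∀ e : HKappa κ, (e : ZFSet.{0}) ∈ (O : ZFSet.{0}) →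
          ∃ y : HKappa κ, (y : ZFSet.{0}) ∈ (e : ZFSet.{0})) ∧
        ∃ a : Fin m → HKappa κ, ∃ O' : HKappa κ, Step Xh C m (w ()) O a O') :=
    DefM.and (DefM.ex (DefM.and (DefM.mem (DTerm.var _) (DTerm.var _))
        (DefM.mem (DTerm.const hXM) (DTerm.var _))))
      (DefM.all (DefM.imp (DefM.mem (DTerm.var _) (DTerm.var _)) (DefM.and
        (DefM.all (DefM.imp (DefM.mem (DTerm.var _) (DTerm.var _))
          (DefM.ex (DefM.mem (DTerm.var _) (DTerm.var _)))))
        (DefM.exs (DefM.ex (step_def hXM hCM m (DTerm.var _) (DTerm.var _) (DTerm.var _)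
          (fun j => DTerm.var _)))))))
  have hmemH : ∀ {t : ZFSet.{0}}, t ∈ X → t ∈ HKappa κ := fun h => heredLt_mem hXH h
  have hstateP : ∀ n, stateZ X a n ∈ X.powerset.powerset := fun n => ZFSet.mem_powerset.2
    fun t ht => (ZFSet.mem_sep.1 ht).1
  -- the set of all states
  let Z : ZFSet.{0} := ZFSet.sep (fun O => ∃ n, O = stateZ X a n) X.powerset.powerset
  have hZmem : ∀ O, O ∈ Z ↔ ∃ n, O = stateZ X a n := by
    intro O
    rw [ZFSet.mem_sep]
    refine ⟨fun h => h.2, fun h => ⟨?_, h⟩⟩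
    obtain ⟨n, rfl⟩ := h
    exact hstateP n
  have hZH : HeredLt κ Z := heredLt_subset hbig fun O hO => (ZFSet.mem_sep.1 hO).1
  obtain ⟨w, hwM, ⟨O₀, hO₀, hXO₀⟩, hw⟩ := hdef.reflect (by
    refine ⟨fun _ => ⟨Z, hZH⟩, ⟨⟨stateZ X a 0, heredLt_mem hbig (hstateP 0)⟩, (hZmem _).2 ⟨0, rfl⟩,
      mem_stateZ.2 ⟨a, ha, fun i hi => absurd hi (Nat.not_lt_zero i), ?_⟩⟩, ?_⟩
    · have : rest 0 a = Set.univ := Set.eq_univ_of_forall fun x i hi => absurd hi (Nat.not_lt_zero i)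
      rw [this]
      ext y
      rw [mem_codeSet]
      exact ⟨fun h => ⟨h, trivial⟩, fun h => h.1⟩
    · rintro ⟨O, hOH⟩ hO
      obtain ⟨n, rfl⟩ := (hZmem O).1 hO
      refine ⟨?_, fun j => cH hbig (a n j),
        ⟨stateZ X a (n + 1), heredLt_mem hbig (hstateP _)⟩, ?_⟩
      · rintro ⟨e, heH⟩ he
        obtain ⟨b, hb, hp, rfl⟩ := mem_stateZ.1 he
        have := hbad n b hb
        rw [sol_iff] at this
        obtain ⟨x, hx⟩ : (rest n b).Nonempty := by
          by_contra hcon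
          exact this ⟨hp, hcon⟩
        exact ⟨⟨x, hmemH x.2⟩, val_mem_codeSet.2 hx⟩
      · refine ⟨fun j => code_mem_closedZ.2 (ha n j), fun y hy => ?_, (hZmem _).2 ⟨_, rfl⟩, ?_⟩
        · obtain ⟨j, hj⟩ := hcov n ⟨y, hy⟩
          exact ⟨j, fun h => hj (mem_codeSet.1 h).2⟩
        · rintro ⟨c, hcH⟩ hc b hb hbs c' hc' hcc
          obtain ⟨b₀, hb₀, hp, hce⟩ := mem_stateZ.1 hc
          refine mem_stateZ.2 ⟨fun i j => if i < n then b₀ i j else decodeSet X (b j), ?_, ?_, ?_⟩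
          · intro i j
            dsimp only
            split_ifs
            · exact hb₀ i j
            · exact (mem_closedZ.1 (hb j)).2
          · intro i hi x
            by_cases hin : i < n
            · simpa [hin] using hp i hin x
            · obtain rfl : i = n := by omega
              have := hbs ⟨x, hmemH x.2⟩ x.2
              simp only [lt_irrefl, if_false]
              exact ⟨fun j hx => this.1 j (val_mem_codeSet.2 hx), this.2⟩
          · ext y
            have hyX : ∀ hy : y ∈ X.toSet, (y ∈ (c' : ZFSet.{0}) ↔ (⟨y, hy⟩ : ↥X.toSet) ∈
                rest (n + 1) (fun i j => if i < n then b₀ i j else decodeSet X (b j))) := by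
              intro hy
              refine (hcc ⟨y, hmemH hy⟩).trans ?_
              have h1 : y ∈ c ↔ (⟨y, hy⟩ : ↥X.toSet) ∈ rest n b₀ := by
                rw [show c = codeSet X (rest n b₀) from hce]
                exact val_mem_codeSet (p := ⟨y, hy⟩)
              constructor
              · rintro ⟨hyc, hyb⟩ i hi j
                by_cases hin : i < n
                · simpa [hin] using h1.1 hyc i hin j
                · simp only [hin, if_false]
                  exact hyb j
              · intro h
                refine ⟨h1.2 fun i hi j => ?_, fun j => ?_⟩
                · simpa [hi] using h i (by omega) j
                · have := h n (by omega) j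
                  simp only [lt_irrefl, if_false] at this
                  exact this
            rw [mem_codeSet]
            constructor
            · intro h
              have hy := (mem_closedZ.1 hc').1 h
              exact ⟨hy, (hyX hy).1 h⟩
            · rintro ⟨hy, h⟩
              exact (hyX hy).2 h)
  -- build the sequence in `M`
  have hZM := hwM ()
  have hstart : ∃ O : HKappa κ, O ∈ M ∧ (O : ZFSet.{0}) ∈ (w () : ZFSet.{0}) ∧
      (Xh : ZFSet.{0}) ∈ (O : ZFSet.{0}) := by
    have hd : DefM (α := Unit) M (fun v => (v () : ZFSet.{0}) ∈ (w () : ZFSet.{0}) ∧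
        (Xh : ZFSet.{0}) ∈ (v () : ZFSet.{0})) :=
      DefM.and (DefM.mem (DTerm.var _) (DTerm.const hZM))
        (DefM.mem (DTerm.const hXM) (DTerm.var _))
    obtain ⟨v, hv, h⟩ := hd.reflect ⟨fun _ => O₀, hO₀, hXO₀⟩
    exact ⟨v (), hv (), h⟩
  have hstep : ∀ O : {O : HKappa κ // O ∈ M ∧ (O : ZFSet.{0}) ∈ (w () : ZFSet.{0})},
      ∃ (a : Fin m → HKappa κ)
        (O' : {O : HKappa κ // O ∈ M ∧ (O : ZFSet.{0}) ∈ (w () : ZFSet.{0})}),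
        (∀ j, a j ∈ M) ∧ Step Xh C m (w ()) O.1 a O'.1 := by
    rintro ⟨O, hOM, hOZ⟩
    have hd : DefM (α := Option (Fin m)) M (fun v =>
        Step Xh C m (w ()) O (fun j => v (some j)) (v none)) :=
      step_def hXM hCM m (DTerm.const hZM) (DTerm.const hOM) (DTerm.var _) (fun j => DTerm.var _)
    obtain ⟨a, O', hs⟩ := (hw O hOZ).2
    obtain ⟨v, hv, h⟩ := hd.reflect ⟨fun k => k.elim O' a, hs⟩
    exact ⟨fun j => v (some j), ⟨v none, hv none, h.2.2.1⟩, fun j => hv _, h⟩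
  choose fa fO hfaM hfs using hstep
  obtain ⟨O₁, hO₁M, hO₁Z, hXO₁⟩ := hstart
  let S : ℕ → {O : HKappa κ // O ∈ M ∧ (O : ZFSet.{0}) ∈ (w () : ZFSet.{0})} :=
    fun n => Nat.rec ⟨O₁, hO₁M, hO₁Z⟩ (fun _ O => fO O) n
  refine ⟨fun i j => decodeSet X (fa (S i) j), fun i j => mem_Lfam_of (hfaM _ _) ((hfs _).1 j),
    fun i x => ?_, fun n b hb hsol => ?_⟩
  · exact (hfs (S i)).2.1 ⟨x, hmemH x.2⟩ x.2
  · rw [sol_iff] at hsol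
    obtain ⟨hp, hne⟩ := hsol
    have key : ∀ k ≤ n, codeSet X (rest k b) ∈ ((S k).1 : ZFSet.{0}) := by
      intro k
      induction k with
      | zero =>
        intro _
        have h1 : rest 0 b = Set.univ :=
          Set.eq_univ_of_forall fun x i hi => absurd hi (Nat.not_lt_zero i)
        have h2 : codeSet X (rest 0 b) = X := by
          rw [h1]
          ext y
          rw [mem_codeSet]
          exact ⟨fun h => h.1, fun h => ⟨h, trivial⟩⟩
        rw [h2]
        exact hXO₁
      | succ k ih =>
        intro hk
        refine (hfs (S k)).2.2.2 (cH hbig (rest k b)) (ih (by omega)) (fun j => cH hbig (b k j))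
          (fun j => code_mem_closedZ.2 (hb k j)) (fun y hy => ?_) (cH hbig (rest (k + 1) b))
          (code_mem_closedZ.2 (isClosed_rest _ b hb)) (fun y => ?_)
        · have := hp k (by omega) ⟨y, hy⟩
          refine ⟨fun j hj => mem_codeSet.2 ⟨hy, this.1 j hj⟩, fun j l hjl => ?_⟩
          exact (this.2 j l hjl).imp (fun h => mem_codeSet.2 ⟨hy, h⟩)
            (fun h => mem_codeSet.2 ⟨hy, h⟩)
        · constructor
          · intro h
            obtain ⟨hy, h⟩ := mem_codeSet.1 h
            exact ⟨mem_codeSet.2 ⟨hy, fun i hi j => h i (by omega) j⟩,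
              fun j => mem_codeSet.2 ⟨hy, h k (by omega) j⟩⟩
          · rintro ⟨h1, h2⟩
            obtain ⟨hy, h1⟩ := mem_codeSet.1 h1
            refine mem_codeSet.2 ⟨hy, fun i hi j => ?_⟩
            rcases Nat.lt_succ_iff_lt_or_eq.1 hi with hi | rfl
            · exact h1 i hi j
            · exact (mem_codeSet.1 (h2 j)).2
    obtain ⟨y, hy⟩ := (hw (S n).1 (S n).2.2).1 (cH hbig (rest n b)) (key n le_rfl)
    obtain ⟨hyX, h⟩ := mem_codeSet.1 hy
    exact hne ⟨_, h⟩

theorem mC_iff_wallman [CompactSpace ↥X.toSet] [T2Space ↥X.toSet]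
    (hbig : HeredLt κ X.powerset.powerset) (hXM : MemOf κ M X)
    (htopM : MemOf κ M (opensZ X)) (m : ℕ) (hm : 0 < m) :
    IsMCSpace m ↥X.toSet ↔ IsMCSpace m (LUltra (Lfam X κ M)) := by
  have hF := goodLat_Lfam hbig hXM htopM
  rw [mC_wallman_iff hF m hm, mC_iff (closedBase_closed _) m hm]
  constructor
  · intro h a ha hcov
    obtain ⟨n, b, hb, hsol⟩ := h a (fun i j => (ha i j).1) hcov
    obtain ⟨b', hb', hsol'⟩ := sol_elem hbig hXM htopM m n a b ha hb hsol hF.univ_mem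
    exact ⟨n, b', hb', hsol'⟩
  · intro h a ha hcov
    by_contra hcon
    push Not at hcon
    obtain ⟨a', ha', hcov', hbad'⟩ := bad_elem hbig hXM htopM m a ha hcov
      (fun n b hb => hcon n b hb)
    obtain ⟨n, b, hb, hsol⟩ := h a' ha' hcov'
    exact hbad' n b (fun i j => (hb i j).1) hsol

end Main

/-- For a compact Hausdorff space `X`, a countable elementary submodel
`M ≺ H(κ)` with `X ∈ M`, `L = 2^X ∩ M`, and `m ≥ 2`: `X` is an `m`-C-space iff `wL` is;
in particular (`m = 2`), `X` is weakly infinite dimensional iff `wL` is. -/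
theorem isMCSpace_iff_wallman
    (X : ZFSet.{0}) [TopologicalSpace ↥X.toSet] [CompactSpace ↥X.toSet]
    [T2Space ↥X.toSet]
    (κ : Cardinal.{1}) (hreg : κ.IsRegular) (hbig : HeredLt κ X.powerset.powerset)
    (M : FirstOrder.Language.graph.ElementarySubstructure (HKappa κ))
    (hMcount : Countable M) (hXM : MemOf κ M X) (htopM : MemOf κ M (opensZ X))
    (m : ℕ) (hm : 2 ≤ m) :
    (IsMCSpace m ↥X.toSet ↔ IsMCSpace m (LUltra (Lfam X κ M))) ∧
    (WeaklyInfiniteDimensional ↥X.toSet ↔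
      WeaklyInfiniteDimensional (LUltra (Lfam X κ M))) := by
  have hF := goodLat_Lfam hbig hXM htopM
  have := compact_wallman hF
  have := t2_wallman hF
  refine ⟨mC_iff_wallman hbig hXM htopM m (by omega), ?_⟩
  rw [← mC_two_iff_wid, ← mC_two_iff_wid]
  exact mC_iff_wallman hbig hXM htopM 2 (by omega)
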